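/- For every T > 0 and every δ ∈ (0, 1] there exists a constant C > 0 such that for all n ∈ ℤ³ and all t ∈ [0, T]: | ∑_{n₁, n₂ ∈ ℤ³ : n₁ + n₂ = n, n₁ ≠ n₂, n₁ ≠ −n₂} ∫₀ᵗ (sin((t − t₁)⟨n⟩)/⟨n⟩) ( ∫₀^{t₁} (sin((t − t₂)⟨n⟩)/⟨n⟩) σ_{n₁}(t₁, t₂) σ_{n₂}(t₁, t₂) dt₂ ) dt₁ | ≤ C ⟨n⟩^{−4 + δ}, the double sum being absolutely convergent. -/

import Mathlib

/-- Japanese bracket of a lattice point `n ∈ ℤ³`: `⟨n⟩ = (1 + |n|²)^{1/2}`. -/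
noncomputable def jb (n : Fin 3 → ℤ) : ℝ :=
  Real.sqrt (1 + ∑ i, ((n i : ℝ)) ^ 2)

/-- The wave correlation kernel
`σ_m(t₁, t₂) = ∫₀^{t₂} ⟨m⟩^{−2} sin((t₁ − s)⟨m⟩) sin((t₂ − s)⟨m⟩) ds`. -/
noncomputable def sigK (m : Fin 3 → ℤ) (t₁ t₂ : ℝ) : ℝ :=
  ∫ s in (0:ℝ)..t₂,
    Real.sin ((t₁ - s) * jb m) * Real.sin ((t₂ - s) * jb m) / jb m ^ 2

/-- The summand of the main pairing contribution:
`∫₀ᵗ (sin((t − t₁)⟨n⟩)/⟨n⟩) ( ∫₀^{t₁} (sin((t − t₂)⟨n⟩)/⟨n⟩)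
  σ_{n₁}(t₁, t₂) σ_{n − n₁}(t₁, t₂) dt₂ ) dt₁`. -/
noncomputable def pairingTerm (n : Fin 3 → ℤ) (t : ℝ) (n₁ : Fin 3 → ℤ) : ℝ :=
  ∫ t₁' in (0:ℝ)..t, (Real.sin ((t - t₁') * jb n) / jb n) *
    ∫ t₂' in (0:ℝ)..t₁', (Real.sin ((t - t₂') * jb n) / jb n) *
      (sigK n₁ t₁' t₂' * sigK (n - n₁) t₁' t₂')

/-!
The kernel `σ_m(t₁, t₂)` equals `t₂ cos((t₁ - t₂)⟨m⟩) / (2⟨m⟩²)` up to an error `O(⟨m⟩⁻³)`. For the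
product of the two main terms with `sin((t - t₂)⟨n⟩)`, one integration by parts in `t₂` gains the
factors `1 / (1 + |⟨n⟩ ± ⟨n₁⟩ ± ⟨n₂⟩|)`. The errors have the same bound, because by the triangle
inequality `1 / ⟨n₁⟩` and `1 / ⟨n₂⟩` are themselves dominated by factors of this kind.

The frequencies `n₁` with prescribed integer parts `j`, `k` of `⟨n₁⟩` and `⟨n - n₁⟩` lie in two
shells centred at `0` and `n`, hence in the intersection of the smaller shell with a slab of width
`≲ max j k / ⟨n⟩`. There are thus `≲ j k / ⟨n⟩` of them, which leaves the sum over `j` and `k` of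
`1 / (⟨n⟩ j k (1 + |⟨n⟩ ± j ± k|))`. Since `⟨n⟩ ≲ max j k`, part of `1 / max j k` pays for
`⟨n⟩^(-1 + δ)`, and the rest makes the exponents of `min j k` and of the resonance factor exceed
`1`, so that the sum converges uniformly in `n`.
-/

open MeasureTheory Metric
open scoped ENNReal RealInnerProductSpace

section PackingBound

variable {α E : Type*} [NormedAddCommGroup E] [MeasurableSpace E] [BorelSpace E]

lemma encard_mul_measure_ball_le (μ : Measure E) [μ.IsAddHaarMeasure] {f : α → E} {r : ℝ}
    (hf : Pairwise fun x y => r + r ≤ dist (f x) (f y)) {S : Set α} {U : Set E}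
    (hU : ∀ x ∈ S, ball (f x) r ⊆ U) :
    (S.encard : ℝ≥0∞) * μ (ball 0 r) ≤ μ U := by
  have hdisj : Pairwise (Function.onFun Disjoint fun x : S => ball (f x) r) := fun x y hxy =>
    ball_disjoint_ball (hf fun h => hxy (Subtype.ext h))
  calc (S.encard : ℝ≥0∞) * μ (ball 0 r) = ∑' x : S, μ (ball (f x) r) := by
        simp only [Measure.addHaar_ball_center, ENNReal.tsum_set_const]
    _ ≤ μ (⋃ x : S, ball (f x) r) :=
        tsum_meas_le_meas_iUnion_of_disjoint μ (fun _ => measurableSet_ball) hdisj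
    _ ≤ μ U := measure_mono (Set.iUnion_subset fun x => hU x x.2)

end PackingBound

section ShellVolumes

lemma volume_plane_norm_sq_mem_Icc_le (a b : ℝ) :
    volume {z : EuclideanSpace ℝ (Fin 2) | ‖z‖ ^ 2 ∈ Set.Icc a b}
      ≤ ENNReal.ofReal (Real.pi * (b - a)) := by
  rcases Set.eq_empty_or_nonempty {z : EuclideanSpace ℝ (Fin 2) | ‖z‖ ^ 2 ∈ Set.Icc a b} with
    hempty | ⟨z₀, haz₀, hz₀b⟩
  · rw [hempty, measure_empty]
    exact zero_le
  have hb : 0 ≤ b := (sq_nonneg ‖z₀‖).trans hz₀b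
  have hab : a ≤ b := haz₀.trans hz₀b
  have hsub : {z : EuclideanSpace ℝ (Fin 2) | ‖z‖ ^ 2 ∈ Set.Icc a b} ⊆
      closedBall 0 √b \ ball 0 √a := fun z ⟨haz, hzb⟩ => by
    simpa using ⟨Real.le_sqrt_of_sq_le hzb, (Real.sqrt_le_left (norm_nonneg z)).2 haz⟩
  have hballs : ball (0 : EuclideanSpace ℝ (Fin 2)) √a ⊆ closedBall 0 √b :=
    ball_subset_closedBall.trans (closedBall_subset_closedBall (Real.sqrt_le_sqrt hab))
  calc volume {z : EuclideanSpace ℝ (Fin 2) | ‖z‖ ^ 2 ∈ Set.Icc a b}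
      ≤ volume (closedBall (0 : EuclideanSpace ℝ (Fin 2)) √b \ ball 0 √a) := measure_mono hsub
    _ = ENNReal.ofReal (b * Real.pi) - ENNReal.ofReal (max a 0 * Real.pi) := by
        rw [measure_sdiff hballs measurableSet_ball.nullMeasurableSet measure_ball_lt_top.ne,
          EuclideanSpace.volume_ball_fin_two, EuclideanSpace.volume_closedBall_fin_two,
          ← ENNReal.ofReal_pow (Real.sqrt_nonneg _), ← ENNReal.ofReal_pow (Real.sqrt_nonneg _),
          ← ENNReal.ofReal_mul (by positivity), ← ENNReal.ofReal_mul (by positivity),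
          Real.sq_sqrt hb, Real.sq_sqrt']
    _ ≤ ENNReal.ofReal (Real.pi * (b - a)) := by
        rw [← ENNReal.ofReal_sub _ (by positivity)]
        apply ENNReal.ofReal_le_ofReal
        nlinarith [Real.pi_pos, le_max_left a 0]

lemma volume_preserving_toLp_cons (d : ℕ) :
    MeasurePreserving fun p : ℝ × EuclideanSpace ℝ (Fin d) =>
      (WithLp.toLp 2 (Fin.cons p.1 p.2.ofLp) : EuclideanSpace ℝ (Fin (d + 1))) := by
  have hcons := (volume_preserving_piFinSuccAbove (fun _ : Fin (d + 1) => ℝ) 0).symm.comp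
    ((MeasurePreserving.id volume).prod (PiLp.volume_preserving_ofLp (Fin d)))
  simp only [MeasurableEquiv.piFinSuccAbove_symm_apply, Fin.insertNthEquiv_zero] at hcons
  exact (PiLp.volume_preserving_toLp (Fin (d + 1))).comp hcons

lemma norm_toLp_cons_sq {d : ℕ} (h : ℝ) (z : EuclideanSpace ℝ (Fin d)) :
    ‖(WithLp.toLp 2 (Fin.cons h z.ofLp) : EuclideanSpace ℝ (Fin (d + 1)))‖ ^ 2
      = h ^ 2 + ‖z‖ ^ 2 := by
  simp [EuclideanSpace.norm_sq_eq, Fin.sum_univ_succ]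

lemma volume_norm_sq_mem_Icc_inter_coord_mem_Icc_le (a b c d : ℝ) :
    volume {y : EuclideanSpace ℝ (Fin 3) | ‖y‖ ^ 2 ∈ Set.Icc a b ∧ y 0 ∈ Set.Icc c d}
      ≤ ENNReal.ofReal (Real.pi * (b - a)) * ENNReal.ofReal (d - c) := by
  set S := {y : EuclideanSpace ℝ (Fin 3) | ‖y‖ ^ 2 ∈ Set.Icc a b ∧ y 0 ∈ Set.Icc c d}
  have hS : MeasurableSet S := ((isClosed_Icc.preimage (by fun_prop)).inter
    (isClosed_Icc.preimage (by fun_prop))).measurableSet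
  have hcons := volume_preserving_toLp_cons 2
  have hslice : ∀ h : ℝ, volume (Prod.mk h ⁻¹'
      ((fun p : ℝ × EuclideanSpace ℝ (Fin 2) => WithLp.toLp 2 (Fin.cons p.1 p.2.ofLp)) ⁻¹' S))
      ≤ (Set.Icc c d).indicator (fun _ => ENNReal.ofReal (Real.pi * (b - a))) h := by
    intro h
    by_cases hh : h ∈ Set.Icc c d
    · rw [Set.indicator_of_mem hh]
      have hannulus := volume_plane_norm_sq_mem_Icc_le (a - h ^ 2) (b - h ^ 2)
      rw [sub_sub_sub_cancel_right] at hannulus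
      refine (measure_mono fun z hz => ?_).trans hannulus
      have hz' := hz.1
      simp only [norm_toLp_cons_sq, Set.mem_Icc] at hz'
      exact ⟨by linarith [hz'.1], by linarith [hz'.2]⟩
    · rw [Set.indicator_of_notMem hh]
      exact (measure_mono_null (fun z hz => hh hz.2) measure_empty).le
  rw [← hcons.measure_preimage hS.nullMeasurableSet, Measure.volume_eq_prod,
    Measure.prod_apply (hcons.measurable hS)]
  refine (lintegral_mono hslice).trans_eq ?_
  rw [lintegral_indicator_const measurableSet_Icc, Real.volume_Icc]

lemma volume_norm_sq_mem_Icc_inter_inner_mem_Icc_le {v : EuclideanSpace ℝ (Fin 3)} (hv : v ≠ 0)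
    (a b c d : ℝ) :
    volume {y : EuclideanSpace ℝ (Fin 3) | ‖y‖ ^ 2 ∈ Set.Icc a b ∧ ⟪v, y⟫ ∈ Set.Icc c d}
      ≤ ENNReal.ofReal (Real.pi * (b - a)) * ENNReal.ofReal ((d - c) / ‖v‖) := by
  have hv' : 0 < ‖v‖ := norm_pos_iff.2 hv
  set w : EuclideanSpace ℝ (Fin 3) := EuclideanSpace.single 0 ‖v‖ with hw
  set R := (ℝ ∙ (w - v))ᗮ.reflection
  have hRw : R w = v := Submodule.reflection_sub (by simp [hw])
  have hinner : ∀ y, ⟪v, R y⟫ = ‖v‖ * y 0 := fun y => by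
    nth_rewrite 1 [← hRw]
    rw [R.inner_map_map, hw, EuclideanSpace.inner_single_left, conj_trivial]
  have hslab : MeasurableSet {y | ‖y‖ ^ 2 ∈ Set.Icc a b ∧ ⟪v, y⟫ ∈ Set.Icc c d} :=
    ((isClosed_Icc.preimage (by fun_prop)).inter
      (isClosed_Icc.preimage (by fun_prop))).measurableSet
  rw [← R.measurePreserving.measure_preimage hslab.nullMeasurableSet, sub_div]
  refine (measure_mono fun y hy => ?_).trans
    (volume_norm_sq_mem_Icc_inter_coord_mem_Icc_le a b (c / ‖v‖) (d / ‖v‖))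
  obtain ⟨hnorm, hc, hd⟩ := hy
  rw [hinner] at hc hd
  rw [R.norm_map] at hnorm
  exact ⟨hnorm, (div_le_iff₀' hv').2 hc, (le_div_iff₀' hv').2 hd⟩

lemma volume_shell_le (a b : ℝ) :
    volume {y : EuclideanSpace ℝ (Fin 3) | ‖y‖ ^ 2 ∈ Set.Icc a b}
      ≤ ENNReal.ofReal (Real.pi * (b - a)) * ENNReal.ofReal (2 * √b) := by
  have hslab := volume_norm_sq_mem_Icc_inter_coord_mem_Icc_le a b (-√b) √b
  rw [sub_neg_eq_add, ← two_mul] at hslab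
  refine (measure_mono fun y hy => ?_).trans hslab
  exact ⟨hy, abs_le.1 ((PiLp.norm_apply_le y 0).trans (Real.le_sqrt_of_sq_le hy.2))⟩

-- `2⟪v, y⟫ = ‖y‖² + ‖v‖² - ‖y - v‖²`, so two shells centred at `0` and `v` meet in a slab.
lemma volume_shell_inter_shell_le {v : EuclideanSpace ℝ (Fin 3)} (hv : v ≠ 0) (a b c d : ℝ) :
    volume {y : EuclideanSpace ℝ (Fin 3) |
        ‖y‖ ^ 2 ∈ Set.Icc a b ∧ ‖y - v‖ ^ 2 ∈ Set.Icc c d}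
      ≤ ENNReal.ofReal (Real.pi * (b - a))
        * ENNReal.ofReal ((b - a + (d - c)) / (2 * ‖v‖)) := by
  have hslab := volume_norm_sq_mem_Icc_inter_inner_mem_Icc_le hv a b
    ((a + ‖v‖ ^ 2 - d) / 2) ((b + ‖v‖ ^ 2 - c) / 2)
  rw [← sub_div, div_div, show b + ‖v‖ ^ 2 - c - (a + ‖v‖ ^ 2 - d) = b - a + (d - c) by ring]
    at hslab
  refine (measure_mono fun y hy => ?_).trans hslab
  obtain ⟨hy, hyv⟩ := hy
  rw [norm_sub_sq_real, real_inner_comm] at hyv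
  exact ⟨hy, by linarith [hy.1, hyv.2], by linarith [hy.2, hyv.1]⟩

end ShellVolumes

section JapaneseBracket

/-- The inclusion of `ℤᵈ` into Euclidean space, as an additive homomorphism; it makes the Euclidean
norm of a lattice point available, since `ι → ℤ` carries the sup norm. -/
def latticeVec {ι : Type*} : (ι → ℤ) →+ EuclideanSpace ℝ ι where
  toFun x := WithLp.toLp 2 fun i => (x i : ℝ)
  map_zero' := by ext; simp
  map_add' x y := by ext; simp

@[simp]
lemma latticeVec_apply {ι : Type*} (x : ι → ℤ) (i : ι) : latticeVec x i = x i := rfl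

lemma one_le_norm_latticeVec {ι : Type*} [Fintype ι] {x : ι → ℤ} (hx : x ≠ 0) :
    1 ≤ ‖latticeVec x‖ := by
  obtain ⟨i, hi⟩ := Function.ne_iff.1 hx
  calc (1 : ℝ) ≤ |(x i : ℝ)| := by exact_mod_cast Int.one_le_abs hi
    _ ≤ ‖latticeVec x‖ := PiLp.norm_apply_le (latticeVec x) i

lemma pairwise_one_le_dist_latticeVec (ι : Type*) [Fintype ι] :
    Pairwise fun x y : ι → ℤ => 1 ≤ dist (latticeVec x) (latticeVec y) := fun x y hxy => by
  change 1 ≤ dist (latticeVec x) (latticeVec y)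
  rw [dist_eq_norm, ← map_sub]
  exact one_le_norm_latticeVec (sub_ne_zero.2 hxy)

lemma jb_sq (x : Fin 3 → ℤ) : jb x ^ 2 = 1 + ‖latticeVec x‖ ^ 2 := by
  rw [jb, Real.sq_sqrt (by positivity), EuclideanSpace.norm_sq_eq]
  simp

lemma one_le_jb (x : Fin 3 → ℤ) : 1 ≤ jb x :=
  Real.one_le_sqrt.2 (le_add_of_nonneg_right (by positivity))

lemma jb_pos (x : Fin 3 → ℤ) : 0 < jb x := one_pos.trans_le (one_le_jb x)

lemma jb_zero : jb 0 = 1 := by simp [jb]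

lemma jb_neg (x : Fin 3 → ℤ) : jb (-x) = jb x := by simp [jb]

lemma norm_latticeVec_le_jb (x : Fin 3 → ℤ) : ‖latticeVec x‖ ≤ jb x :=
  le_of_sq_le_sq (by linarith [jb_sq x]) (jb_pos x).le

lemma jb_le_two_mul_norm_latticeVec {x : Fin 3 → ℤ} (hx : x ≠ 0) :
    jb x ≤ 2 * ‖latticeVec x‖ :=
  le_of_sq_le_sq (by nlinarith [jb_sq x, one_le_norm_latticeVec hx]) (by positivity)

lemma jb_add_le (x y : Fin 3 → ℤ) : jb (x + y) ≤ jb x + jb y := by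
  have hnorm := pow_le_pow_left₀ (norm_nonneg _) (norm_add_le (latticeVec x) (latticeVec y)) 2
  have hcross := mul_le_mul (norm_latticeVec_le_jb x) (norm_latticeVec_le_jb y)
    (norm_nonneg _) (jb_pos x).le
  refine le_of_sq_le_sq ?_ (add_pos (jb_pos x) (jb_pos y)).le
  rw [jb_sq, map_add]
  nlinarith [jb_sq x, jb_sq y]

lemma abs_jb_sub_jb_le (x y : Fin 3 → ℤ) : |jb x - jb y| ≤ jb (x - y) := by
  have hx := jb_add_le (x - y) y
  have hy := jb_add_le (y - x) x
  rw [sub_add_cancel] at hx hy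
  rw [← neg_sub x y, jb_neg] at hy
  exact abs_le.2 ⟨by linarith, by linarith⟩

end JapaneseBracket

section LatticePointCount

/-- The integer parts of the brackets of the two frequencies `x` and `n - x`. On a fibre the
resonance functions `⟨n⟩ ± ⟨x⟩ ± ⟨n - x⟩` are constant up to `O(1)`. -/
noncomputable def bracketFloors (n x : Fin 3 → ℤ) : ℕ × ℕ := (⌊jb x⌋₊, ⌊jb (n - x)⌋₊)

lemma bracketFloors_sub (n x : Fin 3 → ℤ) :
    bracketFloors n (n - x) = (bracketFloors n x).swap := by
  simp [bracketFloors]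

lemma one_le_floor_jb (x : Fin 3 → ℤ) : 1 ≤ ⌊jb x⌋₊ :=
  Nat.le_floor (by exact_mod_cast one_le_jb x)

-- A ball of radius `1/2` moves `‖x‖²` by at most `‖x‖ + 1/4`, which is comparable to the spread
-- of `‖x‖²` at given `⌊⟨x⟩⌋`.
lemma norm_sq_mem_Icc_of_mem_ball {x : Fin 3 → ℤ} {y : EuclideanSpace ℝ (Fin 3)}
    (hy : y ∈ ball (latticeVec x) (1 / 2)) :
    ‖y‖ ^ 2 ∈ Set.Icc ((⌊jb x⌋₊ : ℝ) ^ 2 - 5 * ⌊jb x⌋₊) ((⌊jb x⌋₊ : ℝ) ^ 2 + 5 * ⌊jb x⌋₊) := by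
  have hfloor : (1 : ℝ) ≤ ⌊jb x⌋₊ := by exact_mod_cast one_le_floor_jb x
  have hle := Nat.floor_le (jb_pos x).le
  have hlt := Nat.lt_floor_add_one (jb x)
  obtain ⟨hlo, hhi⟩ := abs_le.1 ((abs_norm_sub_norm_le y (latticeVec x)).trans
    (mem_ball_iff_norm.1 hy).le)
  have hx := norm_latticeVec_le_jb x
  have hjb := jb_sq x
  constructor <;> nlinarith [norm_nonneg y, norm_nonneg (latticeVec x)]

lemma volume_shells_le {j k : ℝ} (hj : 1 ≤ j) (hjk : j ≤ k) (n : Fin 3 → ℤ) :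
    volume {y : EuclideanSpace ℝ (Fin 3) | ‖y‖ ^ 2 ∈ Set.Icc (j ^ 2 - 5 * j) (j ^ 2 + 5 * j) ∧
        ‖y - latticeVec n‖ ^ 2 ∈ Set.Icc (k ^ 2 - 5 * k) (k ^ 2 + 5 * k)}
      ≤ ENNReal.ofReal (200 * Real.pi * (j * k) / jb n) := by
  have hwidth : 0 ≤ Real.pi * (j ^ 2 + 5 * j - (j ^ 2 - 5 * j)) := by
    ring_nf
    positivity
  by_cases hn : n = 0
  · have hsqrt : √(j ^ 2 + 5 * j) ≤ 3 * j := (Real.sqrt_le_left (by positivity)).2 (by nlinarith)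
    refine (measure_mono fun y hy => hy.1).trans ((volume_shell_le _ _).trans ?_)
    rw [← ENNReal.ofReal_mul hwidth, hn, jb_zero, div_one]
    apply ENNReal.ofReal_le_ofReal
    calc Real.pi * (j ^ 2 + 5 * j - (j ^ 2 - 5 * j)) * (2 * √(j ^ 2 + 5 * j))
        ≤ Real.pi * (j ^ 2 + 5 * j - (j ^ 2 - 5 * j)) * (2 * (3 * j)) := by gcongr
      _ = 60 * Real.pi * (j * j) := by ring
      _ ≤ 200 * Real.pi * (j * k) := by gcongr; norm_num
  · have hnorm : 0 < ‖latticeVec n‖ := one_pos.trans_le (one_le_norm_latticeVec hn)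
    refine (volume_shell_inter_shell_le (norm_pos_iff.1 hnorm) _ _ _ _).trans ?_
    rw [← ENNReal.ofReal_mul hwidth]
    apply ENNReal.ofReal_le_ofReal
    calc Real.pi * (j ^ 2 + 5 * j - (j ^ 2 - 5 * j)) *
          ((j ^ 2 + 5 * j - (j ^ 2 - 5 * j) + (k ^ 2 + 5 * k - (k ^ 2 - 5 * k)))
            / (2 * ‖latticeVec n‖))
        = 100 * Real.pi * (j * (j + k)) / (2 * ‖latticeVec n‖) := by field_simp; ring
      _ ≤ 100 * Real.pi * (j * (k + k)) / (2 * ‖latticeVec n‖) := by gcongr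
      _ = 200 * Real.pi * (j * k) / (2 * ‖latticeVec n‖) := by ring
      _ ≤ 200 * Real.pi * (j * k) / jb n := by
        gcongr
        · have hk : 1 ≤ k := hj.trans hjk
          positivity
        · exact jb_pos n
        · exact jb_le_two_mul_norm_latticeVec hn

lemma encard_bracketFloors_fiber_le_of_le (n : Fin 3 → ℤ) {j k : ℕ} (hj : 1 ≤ j) (hjk : j ≤ k) :
    ((bracketFloors n ⁻¹' {(j, k)}).encard : ℝ≥0∞)
      ≤ ENNReal.ofReal (1200 * (j * k) / jb n) := by
  have hballs : ∀ x ∈ bracketFloors n ⁻¹' {(j, k)}, ball (latticeVec x) (1 / 2) ⊆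
      {y | ‖y‖ ^ 2 ∈ Set.Icc ((j : ℝ) ^ 2 - 5 * j) ((j : ℝ) ^ 2 + 5 * j) ∧
        ‖y - latticeVec n‖ ^ 2 ∈ Set.Icc ((k : ℝ) ^ 2 - 5 * k) ((k : ℝ) ^ 2 + 5 * k)} := by
    intro x hx y hy
    obtain ⟨rfl, rfl⟩ := Prod.mk.inj hx
    refine ⟨norm_sq_mem_Icc_of_mem_ball hy, ?_⟩
    rw [norm_sub_rev]
    apply norm_sq_mem_Icc_of_mem_ball
    rwa [map_sub, mem_ball, dist_sub_left, ← mem_ball]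
  have hpack := (encard_mul_measure_ball_le volume
    (by simpa only [add_halves] using pairwise_one_le_dist_latticeVec (Fin 3)) hballs).trans
    (volume_shells_le (j := j) (k := k) (by exact_mod_cast hj) (by exact_mod_cast hjk) n)
  rw [EuclideanSpace.volume_ball_fin_three, ← ENNReal.ofReal_pow (by norm_num),
    ← ENNReal.ofReal_mul (by norm_num)] at hpack
  refine (ENNReal.le_div_iff_mul_le (by simp [Real.pi_pos]) (by simp)).2 hpack |>.trans_eq ?_
  rw [← ENNReal.ofReal_div_of_pos (by positivity)]
  congr 1
  field_simp
  ring

lemma encard_bracketFloors_fiber_le (n : Fin 3 → ℤ) {j k : ℕ} (hj : 1 ≤ j) (hk : 1 ≤ k) :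
    ((bracketFloors n ⁻¹' {(j, k)}).encard : ℝ≥0∞)
      ≤ ENNReal.ofReal (1200 * (j * k) / jb n) := by
  rcases le_total j k with hjk | hkj
  · exact encard_bracketFloors_fiber_le_of_le n hj hjk
  · have hswap : bracketFloors n ⁻¹' {(j, k)} =
        Equiv.subLeft n ⁻¹' (bracketFloors n ⁻¹' {(k, j)}) := by
      ext x
      simp [bracketFloors_sub, Prod.ext_iff, and_comm]
    rw [hswap, Set.encard_preimage_of_bijective (Equiv.subLeft n).bijective, mul_comm (j : ℝ)]
    exact encard_bracketFloors_fiber_le_of_le n hk hkj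

end LatticePointCount

section Phase

/-- The resonance function `a ± b ± c`, applied to the brackets `⟨n⟩`, `⟨n₁⟩`, `⟨n - n₁⟩`; the units
`σ` of `ℤ` are the two signs. -/
def phase (σ : ℤˣ × ℤˣ) (a b c : ℝ) : ℝ := a + ((σ.1 : ℤ) : ℝ) * b + ((σ.2 : ℤ) : ℝ) * c

lemma sum_units_int_prod (g : ℤˣ × ℤˣ → ℝ) :
    ∑ σ, g σ = g (1, 1) + g (1, -1) + (g (-1, 1) + g (-1, -1)) := by
  simp [Fintype.sum_prod_type, UnitsInt.univ]

lemma phase_sub_mul (σ : ℤˣ × ℤˣ) (a b c t t₁ u : ℝ) :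
    phase σ ((t - u) * a) ((t₁ - u) * b) ((t₁ - u) * c)
      = phase σ (t * a) (t₁ * b) (t₁ * c) - phase σ a b c * u := by
  simp only [phase]
  ring

lemma phase_swap (σ : ℤˣ × ℤˣ) (a b c : ℝ) : phase σ.swap a c b = phase σ a b c :=
  add_right_comm _ _ _

lemma abs_phase_le (σ : ℤˣ × ℤˣ) (a b c : ℝ) : |phase σ a b c| ≤ |a| + |b| + |c| := by
  have hunit : ∀ (ε : ℤˣ) (y : ℝ), |((ε : ℤ) : ℝ) * y| = |y| := fun ε y => by
    rcases Int.units_eq_one_or ε with rfl | rfl <;> simp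
  refine (abs_add_three _ _ _).trans_eq ?_
  rw [hunit, hunit]

lemma sin_mul_cos_mul_cos (a b c : ℝ) :
    Real.sin a * Real.cos b * Real.cos c = (∑ σ, Real.sin (phase σ a b c)) / 4 := by
  simp only [sum_units_int_prod, phase, Units.val_one, Units.val_neg, Int.cast_one, Int.cast_neg,
    one_mul, neg_mul, Real.sin_add, Real.cos_add, Real.sin_neg, Real.cos_neg]
  ring

lemma one_div_add_one_div_le_sum_phase {a b c : ℝ} (hb : 1 ≤ b) (hc : 1 ≤ c)
    (hab : |a - b| ≤ c) (hac : |a - c| ≤ b) :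
    1 / b + 1 / c ≤ 3 * ∑ σ, 1 / (1 + |phase σ a b c|) := by
  have hinv : ∀ {y φ : ℝ}, 1 ≤ y → |φ| ≤ 2 * y → 1 / y ≤ 3 * (1 / (1 + |φ|)) := fun hy hφ => by
    rw [mul_one_div, div_le_div_iff₀ (by linarith) (by positivity)]
    linarith
  have hφb : phase (1, -1) a b c = a - c + b := by simp [phase]; ring
  have hφc : phase (-1, 1) a b c = a - b + c := by simp [phase]; ring
  have hb' := hinv hb (φ := phase (1, -1) a b c) (by
    rw [hφb]
    linarith [abs_add_le (a - c) b, abs_of_pos (one_pos.trans_le hb)])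
  have hc' := hinv hc (φ := phase (-1, 1) a b c) (by
    rw [hφc]
    linarith [abs_add_le (a - b) c, abs_of_pos (one_pos.trans_le hc)])
  have hrest : ∀ σ, 0 ≤ 1 / (1 + |phase σ a b c|) := fun σ => by positivity
  rw [sum_units_int_prod]
  linarith [hrest (1, 1), hrest (-1, -1)]

end Phase

section OscillatoryIntegral

lemma abs_integral_le_mul_sub {f : ℝ → ℝ} {a b M : ℝ} (hab : a ≤ b)
    (hM : ∀ u ∈ Set.Icc a b, |f u| ≤ M) : |∫ u in a..b, f u| ≤ M * (b - a) := by
  rw [← abs_of_nonneg (sub_nonneg.2 hab)]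
  refine intervalIntegral.norm_integral_le_of_norm_le_const (f := f) fun u hu => hM u ?_
  rw [Set.uIoc_of_le hab] at hu
  exact Set.Ioc_subset_Icc_self hu

lemma abs_integral_mul_sin_le {f f' : ℝ → ℝ} {a b M M' : ℝ} (hab : a ≤ b)
    (hf : ∀ u ∈ Set.uIcc a b, HasDerivAt f (f' u) u)
    (hf' : IntervalIntegrable f' volume a b) (hM : ∀ u ∈ Set.Icc a b, |f u| ≤ M)
    (hM' : ∀ u ∈ Set.Icc a b, |f' u| ≤ M') (θ κ : ℝ) :
    |∫ u in a..b, f u * Real.sin (θ - κ * u)| ≤ (2 * M + (M + M') * (b - a)) / (1 + |κ|) := by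
  have hosc : ∀ {y m z : ℝ}, |y| ≤ m → |z| ≤ 1 → |y * z| ≤ m := fun hy hz => by
    rw [abs_mul]
    exact (mul_le_of_le_one_right (abs_nonneg _) hz).trans hy
  set I := ∫ u in a..b, f u * Real.sin (θ - κ * u)
  have htriv : |I| ≤ M * (b - a) :=
    abs_integral_le_mul_sub hab fun u hu => hosc (hM u hu) (Real.abs_sin_le_one _)
  have hcos : ∀ u, HasDerivAt (fun u => Real.cos (θ - κ * u)) (κ * Real.sin (θ - κ * u)) u :=
    fun u => ((((hasDerivAt_id u).const_mul κ).const_sub θ).cos).congr_deriv (by simp; ring)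
  have hparts : κ * I = f b * Real.cos (θ - κ * b) - f a * Real.cos (θ - κ * a)
      - ∫ u in a..b, f' u * Real.cos (θ - κ * u) := by
    rw [← intervalIntegral.integral_mul_deriv_eq_deriv_mul hf (fun u _ => hcos u) hf'
      (Continuous.intervalIntegrable (by fun_prop) _ _), ← intervalIntegral.integral_const_mul]
    exact intervalIntegral.integral_congr fun u _ => mul_left_comm _ _ _
  have hbdd : |κ * I| ≤ M + M + M' * (b - a) := by
    rw [hparts]
    refine (abs_sub _ _).trans (add_le_add ((abs_sub _ _).trans (add_le_add ?_ ?_)) ?_)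
    · exact hosc (hM b (Set.right_mem_Icc.2 hab)) (Real.abs_cos_le_one _)
    · exact hosc (hM a (Set.left_mem_Icc.2 hab)) (Real.abs_cos_le_one _)
    · exact abs_integral_le_mul_sub hab fun u hu => hosc (hM' u hu) (Real.abs_cos_le_one _)
  rw [le_div_iff₀ (by positivity)]
  rw [abs_mul] at hbdd
  linarith

lemma abs_integral_sq_mul_sin_le {τ : ℝ} (hτ : 0 ≤ τ) (θ κ : ℝ) :
    |∫ u in (0 : ℝ)..τ, u ^ 2 * Real.sin (θ - κ * u)| ≤ (τ ^ 3 + 4 * τ ^ 2) / (1 + |κ|) := by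
  have hparts := abs_integral_mul_sin_le (f := (· ^ 2)) (f' := (2 * ·)) (M := τ ^ 2)
    (M' := 2 * τ) hτ (fun u _ => by simpa using hasDerivAt_pow 2 u)
    (Continuous.intervalIntegrable (by fun_prop) _ _)
    (fun u hu => by rw [abs_of_nonneg (sq_nonneg u)]; exact pow_le_pow_left₀ hu.1 hu.2 2)
    (fun u hu => by rw [abs_of_nonneg (by linarith [hu.1])]; linarith [hu.2]) θ κ
  exact hparts.trans_eq (by ring)

end OscillatoryIntegral

section CorrelationKernel

/-- The non-oscillating part `t₂ cos((t₁ - t₂)⟨m⟩) / (2⟨m⟩²)` of `σ_m(t₁, t₂)`, which comes from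
the term `cos((t₁ - t₂)⟨m⟩) / 2` of the product of sines, constant in `s`. -/
noncomputable def sigMain (m : Fin 3 → ℤ) (t₁ t₂ : ℝ) : ℝ :=
  t₂ * Real.cos ((t₁ - t₂) * jb m) / (2 * jb m ^ 2)

lemma sigK_sub_sigMain (m : Fin 3 → ℤ) (t₁ t₂ : ℝ) :
    sigK m t₁ t₂ - sigMain m t₁ t₂
      = (Real.sin ((t₁ - t₂) * jb m) - Real.sin ((t₁ + t₂) * jb m)) / (4 * jb m ^ 3) := by
  have hm := jb_pos m
  set F : ℝ → ℝ := fun s => (s * (Real.cos ((t₁ - t₂) * jb m) / 2)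
    + Real.sin ((t₁ + t₂ - 2 * s) * jb m) / (4 * jb m)) / jb m ^ 2
  have hF : ∀ s, HasDerivAt F
      (Real.sin ((t₁ - s) * jb m) * Real.sin ((t₂ - s) * jb m) / jb m ^ 2) s := fun s => by
    have hphase := (((hasDerivAt_id s).const_mul 2).const_sub (t₁ + t₂)).mul_const (jb m)
    refine ((((hasDerivAt_id s).mul_const _).add
      (hphase.sin.div_const (4 * jb m))).div_const (jb m ^ 2)).congr_deriv ?_
    rw [show (t₁ - t₂) * jb m = (t₁ - s) * jb m - (t₂ - s) * jb m by ring, id_eq,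
      show (t₁ + t₂ - 2 * s) * jb m = (t₁ - s) * jb m + (t₂ - s) * jb m by ring,
      Real.cos_sub, Real.cos_add]
    field_simp
    ring
  rw [sigK, intervalIntegral.integral_eq_sub_of_hasDerivAt (fun s _ => hF s)
    (Continuous.intervalIntegrable (by fun_prop) _ _), sigMain]
  simp only [F]
  rw [show t₁ + t₂ - 2 * t₂ = t₁ - t₂ by ring, mul_zero, sub_zero]
  field_simp
  ring

lemma abs_sigK_sub_sigMain_le (m : Fin 3 → ℤ) (t₁ t₂ : ℝ) :
    |sigK m t₁ t₂ - sigMain m t₁ t₂| ≤ 1 / (2 * jb m ^ 3) := by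
  have hm := jb_pos m
  rw [sigK_sub_sigMain, abs_div, abs_of_pos (by positivity : 0 < 4 * jb m ^ 3)]
  calc |Real.sin ((t₁ - t₂) * jb m) - Real.sin ((t₁ + t₂) * jb m)| / (4 * jb m ^ 3)
      ≤ (1 + 1) / (4 * jb m ^ 3) := by
        gcongr
        exact (abs_sub _ _).trans (add_le_add (Real.abs_sin_le_one _) (Real.abs_sin_le_one _))
    _ = 1 / (2 * jb m ^ 3) := by field_simp; norm_num

lemma abs_sigMain_le (m : Fin 3 → ℤ) (t₁ : ℝ) {t₂ : ℝ} (ht₂ : 0 ≤ t₂) :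
    |sigMain m t₁ t₂| ≤ t₂ / (2 * jb m ^ 2) := by
  rw [sigMain, abs_div, abs_mul, abs_of_nonneg ht₂,
    abs_of_nonneg (by positivity : 0 ≤ 2 * jb m ^ 2)]
  gcongr
  exact mul_le_of_le_one_right ht₂ (Real.abs_cos_le_one _)

lemma abs_sigK_le (m : Fin 3 → ℤ) (t₁ : ℝ) {t₂ : ℝ} (ht₂ : 0 ≤ t₂) :
    |sigK m t₁ t₂| ≤ t₂ / jb m ^ 2 := by
  refine (abs_integral_le_mul_sub (M := 1 / jb m ^ 2) ht₂ fun s _ => ?_).trans_eq (by ring)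
  rw [abs_div, abs_mul, abs_of_nonneg (sq_nonneg (jb m))]
  gcongr
  exact mul_le_one₀ (Real.abs_sin_le_one _) (abs_nonneg _) (Real.abs_sin_le_one _)

lemma abs_sigK_mul_sigK_sub_le (m m' : Fin 3 → ℤ) (t₁ : ℝ) {t₂ : ℝ} (ht₂ : 0 ≤ t₂) :
    |sigK m t₁ t₂ * sigK m' t₁ t₂ - sigMain m t₁ t₂ * sigMain m' t₁ t₂|
      ≤ t₂ / (jb m ^ 2 * jb m' ^ 2) * (1 / jb m + 1 / jb m') := by
  have hm := jb_pos m
  have hm' := jb_pos m'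
  calc |sigK m t₁ t₂ * sigK m' t₁ t₂ - sigMain m t₁ t₂ * sigMain m' t₁ t₂|
      = |(sigK m t₁ t₂ - sigMain m t₁ t₂) * sigK m' t₁ t₂
          + sigMain m t₁ t₂ * (sigK m' t₁ t₂ - sigMain m' t₁ t₂)| := by ring_nf
    _ ≤ 1 / (2 * jb m ^ 3) * (t₂ / jb m' ^ 2) + t₂ / (2 * jb m ^ 2) * (1 / (2 * jb m' ^ 3)) := by
        refine (abs_add_le _ _).trans ?_
        rw [abs_mul, abs_mul]
        gcongr
        · exact abs_sigK_sub_sigMain_le m t₁ t₂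
        · exact abs_sigK_le m' t₁ ht₂
        · exact abs_sigMain_le m t₁ ht₂
        · exact abs_sigK_sub_sigMain_le m' t₁ t₂
    _ = t₂ / (jb m ^ 2 * jb m' ^ 2) * (1 / 2 * (1 / jb m) + 1 / 4 * (1 / jb m')) := by
        field_simp
        ring
    _ ≤ t₂ / (jb m ^ 2 * jb m' ^ 2) * (1 / jb m + 1 / jb m') := by
        gcongr <;> exact mul_le_of_le_one_left (by positivity) (by norm_num)

lemma continuous_sigMain (m : Fin 3 → ℤ) (t₁ : ℝ) : Continuous (sigMain m t₁) := by
  unfold sigMain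
  fun_prop

lemma continuous_sigK (m : Fin 3 → ℤ) (t₁ : ℝ) : Continuous (sigK m t₁) := by
  have hsigK : sigK m t₁ = fun t₂ => sigMain m t₁ t₂
      + (Real.sin ((t₁ - t₂) * jb m) - Real.sin ((t₁ + t₂) * jb m)) / (4 * jb m ^ 3) :=
    funext fun t₂ => sub_eq_iff_eq_add'.1 (sigK_sub_sigMain m t₁ t₂)
  rw [hsigK]
  exact (continuous_sigMain m t₁).add (by fun_prop)

end CorrelationKernel

section PairingBound

/-- The bound `⟨x⟩⁻² ⟨n - x⟩⁻² (1 + |⟨n⟩ ± ⟨x⟩ ± ⟨n - x⟩|)⁻¹` for the contribution of the frequency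
`n₁ = x` to `⟨n⟩² pairingTerm`, with the signs given by `σ`. -/
noncomputable def pairingWeight (σ : ℤˣ × ℤˣ) (n x : Fin 3 → ℤ) : ℝ :=
  1 / (jb x ^ 2 * jb (n - x) ^ 2 * (1 + |phase σ (jb n) (jb x) (jb (n - x))|))

lemma pairingWeight_nonneg (σ : ℤˣ × ℤˣ) (n x : Fin 3 → ℤ) : 0 ≤ pairingWeight σ n x := by
  unfold pairingWeight
  positivity

lemma abs_sin_div_jb_le (n : Fin 3 → ℤ) (y : ℝ) : |Real.sin y / jb n| ≤ 1 / jb n := by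
  have hn := jb_pos n
  rw [abs_div, abs_of_pos hn]
  gcongr
  exact Real.abs_sin_le_one _

lemma abs_integral_sin_mul_sigMain_le (n x : Fin 3 → ℤ) (t : ℝ) {t₁ : ℝ} (ht₁ : 0 ≤ t₁) :
    |∫ u in (0 : ℝ)..t₁, Real.sin ((t - u) * jb n) / jb n
        * (sigMain x t₁ u * sigMain (n - x) t₁ u)|
      ≤ (t₁ ^ 3 + 4 * t₁ ^ 2) / (16 * jb n) * ∑ σ, pairingWeight σ n x := by
  have hn := jb_pos n
  have hx := jb_pos x
  have hnx := jb_pos (n - x)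
  set A := 16 * jb n * (jb x ^ 2 * jb (n - x) ^ 2) with hA
  have hexpand : ∀ u, Real.sin ((t - u) * jb n) / jb n * (sigMain x t₁ u * sigMain (n - x) t₁ u)
      = ∑ σ, 1 / A * (u ^ 2 * Real.sin (phase σ (t * jb n) (t₁ * jb x) (t₁ * jb (n - x))
          - phase σ (jb n) (jb x) (jb (n - x)) * u)) := fun u => by
    simp only [← phase_sub_mul, ← Finset.mul_sum]
    rw [← mul_div_cancel₀ (∑ σ, Real.sin _) (four_ne_zero (α := ℝ)), ← sin_mul_cos_mul_cos,
      sigMain, sigMain, hA]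
    field_simp
    ring
  simp only [hexpand]
  rw [intervalIntegral.integral_finsetSum fun σ _ =>
    Continuous.intervalIntegrable (by fun_prop) _ _, Finset.mul_sum]
  refine (Finset.abs_sum_le_sum_abs _ _).trans (Finset.sum_le_sum fun σ _ => ?_)
  rw [intervalIntegral.integral_const_mul, abs_mul, abs_of_pos (by positivity)]
  calc 1 / A * |∫ u in (0 : ℝ)..t₁, u ^ 2 * Real.sin (phase σ (t * jb n) (t₁ * jb x)
        (t₁ * jb (n - x)) - phase σ (jb n) (jb x) (jb (n - x)) * u)|
      ≤ 1 / A * ((t₁ ^ 3 + 4 * t₁ ^ 2) / (1 + |phase σ (jb n) (jb x) (jb (n - x))|)) := by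
        gcongr
        exact abs_integral_sq_mul_sin_le ht₁ _ _
    _ = (t₁ ^ 3 + 4 * t₁ ^ 2) / (16 * jb n) * pairingWeight σ n x := by
        rw [pairingWeight, hA]
        field_simp

lemma one_div_mul_one_div_add_le_sum_pairingWeight (n x : Fin 3 → ℤ) :
    1 / (jb x ^ 2 * jb (n - x) ^ 2) * (1 / jb x + 1 / jb (n - x))
      ≤ 3 * ∑ σ, pairingWeight σ n x := by
  have hphase := one_div_add_one_div_le_sum_phase (one_le_jb x) (one_le_jb (n - x))
    (abs_jb_sub_jb_le n x) (by simpa using abs_jb_sub_jb_le n (n - x))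
  refine (mul_le_mul_of_nonneg_left hphase (by positivity)).trans_eq ?_
  simp only [pairingWeight, ← one_div_mul_one_div, ← Finset.mul_sum]
  ring

lemma abs_integral_sin_mul_sigK_sub_le (n x : Fin 3 → ℤ) (t : ℝ) {t₁ : ℝ} (ht₁ : 0 ≤ t₁) :
    |∫ u in (0 : ℝ)..t₁, Real.sin ((t - u) * jb n) / jb n
        * (sigK x t₁ u * sigK (n - x) t₁ u - sigMain x t₁ u * sigMain (n - x) t₁ u)|
      ≤ 3 * t₁ ^ 2 / jb n * ∑ σ, pairingWeight σ n x := by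
  have hn := jb_pos n
  have hx := jb_pos x
  have hnx := jb_pos (n - x)
  have hpoint : ∀ u ∈ Set.Icc 0 t₁, |Real.sin ((t - u) * jb n) / jb n
      * (sigK x t₁ u * sigK (n - x) t₁ u - sigMain x t₁ u * sigMain (n - x) t₁ u)|
      ≤ 1 / jb n * (t₁ / (jb x ^ 2 * jb (n - x) ^ 2) * (1 / jb x + 1 / jb (n - x))) := by
    intro u hu
    rw [abs_mul]
    gcongr
    · exact abs_sin_div_jb_le n _
    · refine (abs_sigK_mul_sigK_sub_le x (n - x) t₁ hu.1).trans ?_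
      gcongr
      exact hu.2
  calc _ ≤ 1 / jb n * (t₁ / (jb x ^ 2 * jb (n - x) ^ 2) * (1 / jb x + 1 / jb (n - x)))
        * (t₁ - 0) := abs_integral_le_mul_sub ht₁ hpoint
    _ = t₁ ^ 2 / jb n * (1 / (jb x ^ 2 * jb (n - x) ^ 2) * (1 / jb x + 1 / jb (n - x))) := by ring
    _ ≤ t₁ ^ 2 / jb n * (3 * ∑ σ, pairingWeight σ n x) :=
        mul_le_mul_of_nonneg_left (one_div_mul_one_div_add_le_sum_pairingWeight n x)
          (by positivity)
    _ = 3 * t₁ ^ 2 / jb n * ∑ σ, pairingWeight σ n x := by ring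

lemma abs_integral_sin_mul_sigK_le (n x : Fin 3 → ℤ) (t : ℝ) {t₁ : ℝ} (ht₁ : 0 ≤ t₁) :
    |∫ u in (0 : ℝ)..t₁, Real.sin ((t - u) * jb n) / jb n * (sigK x t₁ u * sigK (n - x) t₁ u)|
      ≤ (t₁ ^ 3 + 4 * t₁ ^ 2) / jb n * ∑ σ, pairingWeight σ n x := by
  have hn := jb_pos n
  have hW : 0 ≤ ∑ σ, pairingWeight σ n x :=
    Finset.sum_nonneg fun σ _ => pairingWeight_nonneg σ n x
  have hmain := (continuous_sigMain x t₁).mul (continuous_sigMain (n - x) t₁)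
  have hrest := ((continuous_sigK x t₁).mul (continuous_sigK (n - x) t₁)).sub hmain
  have hsin : Continuous fun u => Real.sin ((t - u) * jb n) / jb n := by fun_prop
  have hsplit := intervalIntegral.integral_add (μ := volume)
    ((hsin.mul hmain).intervalIntegrable 0 t₁) ((hsin.mul hrest).intervalIntegrable 0 t₁)
  simp only [Pi.mul_apply, Pi.sub_apply, ← mul_add, add_sub_cancel] at hsplit
  rw [hsplit]
  calc _ ≤ _ := (abs_add_le _ _).trans (add_le_add (abs_integral_sin_mul_sigMain_le n x t ht₁)
        (abs_integral_sin_mul_sigK_sub_le n x t ht₁))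
    _ = (t₁ ^ 3 / 16 + (4 / 16 + 3) * t₁ ^ 2) / jb n * ∑ σ, pairingWeight σ n x := by
        field_simp
        ring
    _ ≤ (t₁ ^ 3 + 4 * t₁ ^ 2) / jb n * ∑ σ, pairingWeight σ n x := by
        gcongr
        · exact div_le_self (by positivity) (by norm_num)
        · norm_num

lemma abs_pairingTerm_le (n x : Fin 3 → ℤ) {t : ℝ} (ht : 0 ≤ t) :
    |pairingTerm n t x|
      ≤ (t ^ 4 + 4 * t ^ 3) / jb n ^ 2 * ∑ σ, pairingWeight σ n x := by
  have hn := jb_pos n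
  have hW : 0 ≤ ∑ σ, pairingWeight σ n x :=
    Finset.sum_nonneg fun σ _ => pairingWeight_nonneg σ n x
  refine (abs_integral_le_mul_sub (M := 1 / jb n *
    ((t ^ 3 + 4 * t ^ 2) / jb n * ∑ σ, pairingWeight σ n x)) ht fun t₁ ht₁ => ?_).trans_eq ?_
  · rw [abs_mul]
    gcongr
    · exact abs_sin_div_jb_le n _
    · refine (abs_integral_sin_mul_sigK_le n x t ht₁.1).trans ?_
      have h0 := ht₁.1
      have h1 := ht₁.2
      gcongr
  · field_simp
    ring

end PairingBound

section ResonanceSum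

lemma summable_one_add_abs_int_rpow {p : ℝ} (hp : 1 < p) :
    Summable fun m : ℤ => (1 + |(m : ℝ)|) ^ (-p) := by
  have hnat : Summable fun k : ℕ => (1 + (k : ℝ)) ^ (-p) := by
    simpa [add_comm] using (summable_nat_add_iff 1).2 (Real.summable_nat_rpow.2 (neg_lt_neg hp))
  exact Summable.of_nat_of_neg (by simpa using hnat) (by simpa using hnat)

lemma one_add_abs_add_rpow_neg_le {p : ℝ} (hp : 0 ≤ p) {x y : ℝ} (hy : |y| ≤ 1) :
    (1 + |x + y|) ^ (-p) ≤ 2 ^ p * (1 + |x|) ^ (-p) := by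
  have hx : (1 + |x|) / 2 ≤ 1 + |x + y| := by
    have hsub := abs_sub (x + y) y
    rw [add_sub_cancel_right] at hsub
    linarith [abs_nonneg (x + y)]
  refine (Real.rpow_le_rpow_of_nonpos (by positivity) hx (neg_nonpos.2 hp)).trans_eq ?_
  rw [Real.div_rpow (by positivity) zero_le_two, Real.rpow_neg zero_le_two, div_inv_eq_mul,
    mul_comm]

lemma exists_tsum_one_add_abs_int_add_rpow_le {p : ℝ} (hp : 1 < p) :
    ∃ K : ℝ≥0∞, K ≠ ⊤ ∧ ∀ y : ℝ, ∑' m : ℤ, ENNReal.ofReal ((1 + |m + y|) ^ (-p)) ≤ K := by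
  refine ⟨_, ((summable_one_add_abs_int_rpow hp).mul_left (2 ^ p)).tsum_ofReal_ne_top,
    fun y => ?_⟩
  rw [← (Equiv.subRight ⌊y⌋).tsum_eq fun m : ℤ => ENNReal.ofReal ((1 + |m + y|) ^ (-p))]
  refine ENNReal.tsum_le_tsum fun m => ENNReal.ofReal_le_ofReal ?_
  have hfract : ((m - ⌊y⌋ : ℤ) : ℝ) + y = m + Int.fract y := by
    push_cast
    rw [← Int.self_sub_floor]
    ring
  rw [Equiv.subRight_apply, hfract]
  exact one_add_abs_add_rpow_neg_le (by linarith)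
    ((abs_of_nonneg (Int.fract_nonneg y)).trans_le (Int.fract_lt_one y).le)

lemma tsum_one_add_abs_phase_rpow_le (p : ℝ) (σ : ℤˣ × ℤˣ) (a b : ℝ) :
    ∑' k : ℕ, ENNReal.ofReal ((1 + |phase σ a b k|) ^ (-p))
      ≤ ∑' m : ℤ, ENNReal.ofReal ((1 + |m + (a + ((σ.1 : ℤ) : ℝ) * b)|) ^ (-p)) := by
  have hinj : Function.Injective fun k : ℕ => (σ.2 : ℤ) * k :=
    (mul_right_injective₀ σ.2.ne_zero).comp Nat.cast_injective
  simpa [phase, add_comm] using ENNReal.tsum_comp_le_tsum_of_injective hinj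
    fun m : ℤ => ENNReal.ofReal ((1 + |m + (a + ((σ.1 : ℤ) : ℝ) * b)|) ^ (-p))

lemma tsum_prod_mul_le {α β : Type*} {w : α → ℝ≥0∞} {g : α × β → ℝ≥0∞} {K : ℝ≥0∞}
    (hg : ∀ a, ∑' b, g (a, b) ≤ K) : ∑' q : α × β, w q.1 * g q ≤ (∑' a, w a) * K := by
  rw [ENNReal.tsum_prod', ← ENNReal.tsum_mul_right]
  exact ENNReal.tsum_le_tsum fun a => ENNReal.tsum_mul_left.trans_le (mul_right_mono (hg a))

lemma exists_tsum_rpow_mul_phase_rpow_le {p : ℝ} (hp : 1 < p) :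
    ∃ L : ℝ≥0∞, L ≠ ⊤ ∧ ∀ (σ : ℤˣ × ℤˣ) (a : ℝ), ∑' q : ℕ × ℕ, ENNReal.ofReal
      (((q.1 : ℝ) ^ (-p) + (q.2 : ℝ) ^ (-p)) * (1 + |phase σ a q.1 q.2|) ^ (-p)) ≤ L := by
  obtain ⟨K, hK, hsum⟩ := exists_tsum_one_add_abs_int_add_rpow_le hp
  set w : ℕ → ℝ≥0∞ := fun j => ENNReal.ofReal ((j : ℝ) ^ (-p))
  have hw : ∑' j, w j ≠ ⊤ := (Real.summable_nat_rpow.2 (neg_lt_neg hp)).tsum_ofReal_ne_top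
  refine ⟨(∑' j, w j) * K + (∑' k, w k) * K, by finiteness, fun σ a => ?_⟩
  set g : ℕ × ℕ → ℝ≥0∞ := fun q => ENNReal.ofReal ((1 + |phase σ a q.1 q.2|) ^ (-p))
  have hsplit : ∀ q : ℕ × ℕ, ENNReal.ofReal
      (((q.1 : ℝ) ^ (-p) + (q.2 : ℝ) ^ (-p)) * (1 + |phase σ a q.1 q.2|) ^ (-p))
      = w q.1 * g q + w q.2 * g q := fun q => by
    rw [ENNReal.ofReal_mul (by positivity), ENNReal.ofReal_add (by positivity) (by positivity),
      add_mul]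
  simp only [hsplit]
  rw [ENNReal.tsum_add, ← (Equiv.prodComm ℕ ℕ).tsum_eq fun q : ℕ × ℕ => w q.2 * g q]
  refine add_le_add (tsum_prod_mul_le fun j => ?_)
    (tsum_prod_mul_le (g := g ∘ Prod.swap) fun k => ?_)
  · exact (tsum_one_add_abs_phase_rpow_le p σ a j).trans (hsum _)
  · simp only [Function.comp_apply, Prod.swap_prod_mk, g, ← phase_swap σ]
    exact (tsum_one_add_abs_phase_rpow_le p σ.swap a k).trans (hsum _)

end ResonanceSum

section LatticeSum

lemma rpow_mul_rpow_mul_rpow_le {x y z M α β γ : ℝ} (hx : 0 ≤ x) (hy : 0 ≤ y) (hz : 0 ≤ z)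
    (hxM : x ≤ M) (hyM : y ≤ M) (hzM : z ≤ M) (hα : 0 ≤ α) (hβ : 0 ≤ β) (hγ : 0 ≤ γ)
    (hsum : α + β + γ = 1) : x ^ α * y ^ β * z ^ γ ≤ M := by
  have hM : 0 ≤ M := hx.trans hxM
  calc x ^ α * y ^ β * z ^ γ ≤ M ^ α * M ^ β * M ^ γ := by gcongr
    _ = M := by
      rw [← Real.rpow_add_of_nonneg hM hα hβ, ← Real.rpow_add_of_nonneg hM (add_nonneg hα hβ) hγ,
        hsum, Real.rpow_one]

-- All of `a`, `J` and `Q` are at most `7K`, so a factor `K⁻¹` can be traded for powers of them.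
lemma one_div_mul_mul_le_of_le {δ a J K Q : ℝ} (hδ0 : 0 ≤ δ) (hδ1 : δ ≤ 1) (ha : 0 < a)
    (hJ : 1 ≤ J) (hJK : J ≤ K) (hQ : 0 < Q) (haJK : a ≤ 2 * (J + K)) (hQJK : Q ≤ 1 + (a + J + K)) :
    1 / (J * K * Q) ≤ 7 * a ^ (-1 + δ) * (J ^ (-(1 + δ / 2)) * Q ^ (-(1 + δ / 2))) := by
  have hJ0 : 0 < J := by linarith
  have htrade : a ^ (1 - δ) * J ^ (δ / 2) * Q ^ (δ / 2) ≤ 7 * K :=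
    rpow_mul_rpow_mul_rpow_le ha.le hJ0.le hQ.le (by linarith) (by linarith) (by linarith)
      (by linarith) (by linarith) (by linarith) (by ring)
  calc 1 / (J * K * Q) = 7 * (1 / (7 * K)) * (1 / (J * Q)) := by field_simp
    _ ≤ 7 * (1 / (a ^ (1 - δ) * J ^ (δ / 2) * Q ^ (δ / 2))) * (1 / (J * Q)) := by gcongr
    _ = 7 * a ^ (-1 + δ) * (J ^ (-(1 + δ / 2)) * Q ^ (-(1 + δ / 2))) := by
      rw [Real.rpow_neg hJ0.le, Real.rpow_neg hQ.le, show -1 + δ = -(1 - δ) by ring,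
        Real.rpow_neg ha.le, Real.rpow_add hJ0, Real.rpow_add hQ, Real.rpow_one, Real.rpow_one]
      field_simp

lemma one_div_mul_mul_le {δ a J K Q : ℝ} (hδ0 : 0 ≤ δ) (hδ1 : δ ≤ 1) (ha : 0 < a)
    (hJ : 1 ≤ J) (hK : 1 ≤ K) (hQ : 0 < Q) (haJK : a ≤ 2 * (J + K)) (hQJK : Q ≤ 1 + (a + J + K)) :
    1 / (J * K * Q)
      ≤ 7 * a ^ (-1 + δ) * ((J ^ (-(1 + δ / 2)) + K ^ (-(1 + δ / 2))) * Q ^ (-(1 + δ / 2))) := by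
  rw [add_mul, mul_add]
  rcases le_total J K with hJK | hKJ
  · exact (one_div_mul_mul_le_of_le hδ0 hδ1 ha hJ hJK hQ haJK hQJK).trans
      (le_add_of_nonneg_right (by positivity))
  · rw [mul_comm J]
    exact (one_div_mul_mul_le_of_le hδ0 hδ1 ha hK hKJ hQ (by linarith) (by linarith)).trans
      (le_add_of_nonneg_left (by positivity))

lemma pairingWeight_le_of_bracketFloors_eq (σ : ℤˣ × ℤˣ) {n x : Fin 3 → ℤ} {j k : ℕ}
    (hx : bracketFloors n x = (j, k)) :
    pairingWeight σ n x ≤ 3 / ((j : ℝ) ^ 2 * (k : ℝ) ^ 2 * (1 + |phase σ (jb n) j k|)) := by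
  obtain ⟨rfl, rfl⟩ := Prod.mk.inj hx
  have hfloor : ∀ y : Fin 3 → ℤ, 0 < (⌊jb y⌋₊ : ℝ) ∧ (⌊jb y⌋₊ : ℝ) ≤ jb y
      ∧ |(⌊jb y⌋₊ : ℝ) - jb y| ≤ 1 := fun y => by
    have hle := Nat.floor_le (jb_pos y).le
    refine ⟨by exact_mod_cast one_le_floor_jb y, hle, ?_⟩
    rw [abs_sub_comm, abs_of_nonneg (sub_nonneg.2 hle)]
    linarith [Nat.lt_floor_add_one (jb y)]
  obtain ⟨hj0, hj, hjx⟩ := hfloor x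
  obtain ⟨hk0, hk, hkx⟩ := hfloor (n - x)
  have hphase : 1 + |phase σ (jb n) ⌊jb x⌋₊ ⌊jb (n - x)⌋₊|
      ≤ 3 * (1 + |phase σ (jb n) (jb x) (jb (n - x))|) := by
    have hshift := abs_phase_le σ 0 (⌊jb x⌋₊ - jb x) (⌊jb (n - x)⌋₊ - jb (n - x))
    have hdiff : phase σ (jb n) ⌊jb x⌋₊ ⌊jb (n - x)⌋₊ = phase σ (jb n) (jb x) (jb (n - x))
        + phase σ 0 (⌊jb x⌋₊ - jb x) (⌊jb (n - x)⌋₊ - jb (n - x)) := by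
      simp only [phase]
      ring
    rw [hdiff]
    refine (add_le_add_right (abs_add_le _ _) 1).trans ?_
    rw [abs_zero] at hshift
    linarith [abs_nonneg (phase σ (jb n) (jb x) (jb (n - x)))]
  rw [pairingWeight, div_le_div_iff₀ (by have := jb_pos x; have := jb_pos (n - x); positivity)
    (by positivity), one_mul]
  calc (⌊jb x⌋₊ : ℝ) ^ 2 * (⌊jb (n - x)⌋₊ : ℝ) ^ 2
        * (1 + |phase σ (jb n) ⌊jb x⌋₊ ⌊jb (n - x)⌋₊|)
      ≤ jb x ^ 2 * jb (n - x) ^ 2 * (3 * (1 + |phase σ (jb n) (jb x) (jb (n - x))|)) := by gcongr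
    _ = 3 * (jb x ^ 2 * jb (n - x) ^ 2 * (1 + |phase σ (jb n) (jb x) (jb (n - x))|)) := by ring

lemma tsum_pairingWeight_fiber_le (σ : ℤˣ × ℤˣ) (n : Fin 3 → ℤ) {j k : ℕ} (hj : 1 ≤ j)
    (hk : 1 ≤ k) :
    ∑' x : bracketFloors n ⁻¹' {(j, k)}, ENNReal.ofReal (pairingWeight σ n x)
      ≤ ENNReal.ofReal (3600 / jb n * (1 / (j * k * (1 + |phase σ (jb n) j k|)))) := by
  have hn := jb_pos n
  calc ∑' x : bracketFloors n ⁻¹' {(j, k)}, ENNReal.ofReal (pairingWeight σ n x)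
      ≤ ∑' _ : bracketFloors n ⁻¹' {(j, k)},
          ENNReal.ofReal (3 / ((j : ℝ) ^ 2 * (k : ℝ) ^ 2 * (1 + |phase σ (jb n) j k|))) :=
        ENNReal.tsum_le_tsum fun x =>
          ENNReal.ofReal_le_ofReal (pairingWeight_le_of_bracketFloors_eq σ x.2)
    _ ≤ ENNReal.ofReal (1200 * (j * k) / jb n) *
          ENNReal.ofReal (3 / ((j : ℝ) ^ 2 * (k : ℝ) ^ 2 * (1 + |phase σ (jb n) j k|))) := by
        rw [ENNReal.tsum_set_const]
        gcongr
        exact encard_bracketFloors_fiber_le n hj hk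
    _ = ENNReal.ofReal (3600 / jb n * (1 / (j * k * (1 + |phase σ (jb n) j k|)))) := by
        rw [← ENNReal.ofReal_mul (by positivity)]
        congr 1
        field_simp
        norm_num

lemma tsum_pairingWeight_fiber_le_rpow {δ : ℝ} (hδ0 : 0 ≤ δ) (hδ1 : δ ≤ 1) (σ : ℤˣ × ℤˣ)
    (n : Fin 3 → ℤ) (q : ℕ × ℕ) :
    ∑' x : bracketFloors n ⁻¹' {q}, ENNReal.ofReal (pairingWeight σ n x)
      ≤ ENNReal.ofReal (25200 * jb n ^ (-2 + δ)) * ENNReal.ofReal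
        (((q.1 : ℝ) ^ (-(1 + δ / 2)) + (q.2 : ℝ) ^ (-(1 + δ / 2)))
          * (1 + |phase σ (jb n) q.1 q.2|) ^ (-(1 + δ / 2))) := by
  have hn := jb_pos n
  rcases Set.eq_empty_or_nonempty (bracketFloors n ⁻¹' {q}) with hempty | ⟨x, rfl⟩
  · simp [hempty]
  have hj : 1 ≤ ⌊jb x⌋₊ := one_le_floor_jb x
  have hk : 1 ≤ ⌊jb (n - x)⌋₊ := one_le_floor_jb (n - x)
  refine (tsum_pairingWeight_fiber_le σ n hj hk).trans ?_
  have hj' : (1 : ℝ) ≤ ⌊jb x⌋₊ := by exact_mod_cast hj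
  have hk' : (1 : ℝ) ≤ ⌊jb (n - x)⌋₊ := by exact_mod_cast hk
  have hadd : jb n ≤ jb x + jb (n - x) := by simpa using jb_add_le x (n - x)
  have hphase := abs_phase_le σ (jb n) ⌊jb x⌋₊ ⌊jb (n - x)⌋₊
  rw [abs_of_pos hn, Nat.abs_cast, Nat.abs_cast] at hphase
  have hkey := one_div_mul_mul_le hδ0 hδ1 hn hj' hk'
    (by positivity : 0 < 1 + |phase σ (jb n) ⌊jb x⌋₊ ⌊jb (n - x)⌋₊|)
    (by linarith [Nat.lt_floor_add_one (jb x), Nat.lt_floor_add_one (jb (n - x))])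
    (by linarith)
  rw [← ENNReal.ofReal_mul (by positivity)]
  refine ENNReal.ofReal_le_ofReal
    ((mul_le_mul_of_nonneg_left hkey (by positivity)).trans_eq ?_)
  rw [show -2 + δ = -1 + δ - 1 by ring, Real.rpow_sub_one hn.ne']
  simp only [bracketFloors]
  ring

lemma summable_and_tsum_le_of_tsum_ofReal_le {ι : Type*} {f : ι → ℝ} (hf : ∀ i, 0 ≤ f i) {B : ℝ}
    (hB : 0 ≤ B) (h : ∑' i, ENNReal.ofReal (f i) ≤ ENNReal.ofReal B) :
    Summable f ∧ ∑' i, f i ≤ B := by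
  have hsum : Summable f := by
    simpa [ENNReal.toReal_ofReal (hf _)] using
      ENNReal.summable_toReal (h.trans_lt ENNReal.ofReal_lt_top).ne
  rw [← ENNReal.ofReal_tsum_of_nonneg hf hsum] at h
  exact ⟨hsum, (ENNReal.ofReal_le_ofReal_iff hB).1 h⟩

lemma exists_tsum_pairingWeight_le {δ : ℝ} (hδ0 : 0 < δ) (hδ1 : δ ≤ 1) :
    ∃ C : ℝ, 0 ≤ C ∧ ∀ (σ : ℤˣ × ℤˣ) (n : Fin 3 → ℤ), Summable (pairingWeight σ n) ∧
      ∑' x, pairingWeight σ n x ≤ C * jb n ^ (-2 + δ) := by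
  obtain ⟨L, hL, hsum⟩ := exists_tsum_rpow_mul_phase_rpow_le (p := 1 + δ / 2) (by linarith)
  refine ⟨25200 * L.toReal, by positivity, fun σ n => ?_⟩
  have hn := jb_pos n
  refine summable_and_tsum_le_of_tsum_ofReal_le (pairingWeight_nonneg σ n) (by positivity) ?_
  rw [← ENNReal.tsum_fiberwise _ (bracketFloors n)]
  refine (ENNReal.tsum_le_tsum (tsum_pairingWeight_fiber_le_rpow hδ0.le hδ1 σ n)).trans ?_
  rw [ENNReal.tsum_mul_left, mul_right_comm, ENNReal.ofReal_mul' ENNReal.toReal_nonneg,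
    ENNReal.ofReal_toReal hL]
  gcongr
  exact hsum σ (jb n)

end LatticeSum

lemma summable_ite_and_abs_tsum_ite_le {ι : Type*} (P : ι → Prop) [DecidablePred P] {f : ι → ℝ}
    (hf : Summable fun i => |f i|) :
    Summable (fun i => if P i then f i else 0) ∧
      |∑' i, if P i then f i else 0| ≤ ∑' i, |f i| := by
  have hle : ∀ i, ‖if P i then f i else 0‖ ≤ |f i| := fun i => by
    split_ifs <;> simp
  exact ⟨.of_norm_bounded hf hle, tsum_of_norm_bounded hf.hasSum hle⟩

theorem second_order_object_extra_smoothing_general (T : ℝ) (hT : 0 < T) (δ : ℝ) (hδ : 0 < δ) :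
    ∃ C : ℝ, 0 < C ∧ ∀ (n : Fin 3 → ℤ) (t : ℝ), t ∈ Set.Icc 0 T →
      Summable (fun n₁ : Fin 3 → ℤ => |pairingTerm n t n₁|) ∧
      ∑' n₁ : Fin 3 → ℤ, |pairingTerm n t n₁| ≤ C * jb n ^ (-4 + δ) := by
  obtain ⟨C, hC, hweight⟩ := exists_tsum_pairingWeight_le (lt_min hδ one_pos) (min_le_right δ 1)
  refine ⟨(T ^ 4 + 4 * T ^ 3) * (4 * C + 1), by positivity, fun n t ht => ?_⟩
  have hn := jb_pos n
  set A := (T ^ 4 + 4 * T ^ 3) / jb n ^ 2 with hA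
  have hbound : ∀ x, |pairingTerm n t x| ≤ A * ∑ σ, pairingWeight σ n x := fun x => by
    refine (abs_pairingTerm_le n x ht.1).trans ?_
    have hW : 0 ≤ ∑ σ, pairingWeight σ n x :=
      Finset.sum_nonneg fun σ _ => pairingWeight_nonneg σ n x
    obtain ⟨ht0, htT⟩ := ht
    rw [hA]
    gcongr
  have hsum := (hasSum_sum fun σ (_ : σ ∈ Finset.univ) => (hweight σ n).1.hasSum).mul_left A
  have hsummable := Summable.of_nonneg_of_le (fun _ => abs_nonneg _) hbound hsum.summable
  refine ⟨hsummable, ?_⟩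
  calc ∑' x, |pairingTerm n t x| ≤ A * ∑ σ, ∑' x, pairingWeight σ n x :=
        hasSum_le hbound hsummable.hasSum hsum
    _ ≤ A * ∑ _σ : ℤˣ × ℤˣ, C * jb n ^ (-2 + min δ 1) := by
        gcongr with σ
        exact (hweight σ n).2
    _ = (T ^ 4 + 4 * T ^ 3) * (4 * C) * jb n ^ (-4 + min δ 1) := by
        rw [sum_units_int_prod, show -4 + min δ 1 = -2 + min δ 1 - 2 by ring, Real.rpow_sub hn,
          Real.rpow_two, hA]
        ring
    _ ≤ (T ^ 4 + 4 * T ^ 3) * (4 * C + 1) * jb n ^ (-4 + δ) := by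
        gcongr
        · linarith
        · exact one_le_jb n
        · exact min_le_left δ 1

theorem second_order_object_extra_smoothing
    (T : ℝ) (hT : 0 < T) (δ : ℝ) (hδ0 : 0 < δ) (hδ1 : δ ≤ 1) :
    ∃ C : ℝ, 0 < C ∧ ∀ (n : Fin 3 → ℤ) (t : ℝ), t ∈ Set.Icc 0 T →
      Summable (fun n₁ : Fin 3 → ℤ =>
        if n₁ ≠ n - n₁ ∧ n₁ ≠ -(n - n₁) then pairingTerm n t n₁ else 0) ∧
      |∑' n₁ : Fin 3 → ℤ,
          (if n₁ ≠ n - n₁ ∧ n₁ ≠ -(n - n₁) then pairingTerm n t n₁ else 0)|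
        ≤ C * jb n ^ (-4 + δ) := by
  obtain ⟨C, hC, h⟩ := second_order_object_extra_smoothing_general T hT δ hδ0
  exact ⟨C, hC, fun n t ht => (summable_ite_and_abs_tsum_ite_le _ (h n t ht).1).imp_right
    fun hle => hle.trans (h n t ht).2⟩
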